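/- Let μ be a Borel probability measure on ℝ with ∫_ℝ e^{itx} dμ(x) = e^{−|t|^α} for all t (0 < α ≤ 2), and let w₁, w₂ : ℝ → [0,∞) be integrable even functions. Define h₁(x,y) = ∫_ℝ cos(t(x−y)) w₁(t) dt, c₁ = (1/2) ∫_ℝ e^{−2|t|^α} w₁(t) dt, c₂ = ∫_ℝ e^{−2|t|^α} w₂(t) dt, and h₂(x) = ∫_ℝ cos(tx) e^{−|t|^α} (w₁(t) − w₂(t)) dt − c₁ + c₂. Then for every x₁ ∈ ℝ: (a) ∫_ℝ h₁(x₁, y) dμ(y) = ∫_ℝ cos(t x₁) e^{−|t|^α} w₁(t) dt; (b) ∫_ℝ h₂(y) dμ(y) = c₁; and (c) ∫_ℝ ( h₁(x₁, y) − h₂(x₁) − h₂(y) ) dμ(y) = ∫_ℝ cos(t x₁) e^{−|t|^α} w₂(t) dt − c₂. -/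

import Mathlib

open MeasureTheory Real

open scoped RealInnerProductSpace

/-!
Integrating `cos ⟪a - y, t⟫` over `y` with respect to a law whose characteristic function is the
real function `φ` gives `cos ⟪a, t⟫ * φ t`. By Fubini, averaging the translates of a cosine
transform over that law therefore multiplies its weight by `φ`. As `h₁` and `h₂` are built from
the cosine transforms of `w₁` and `φ (w₁ - w₂)`, the projections follow by linearity; `c₁` carries
the factor `1 / 2` so that the mean `2 c₁ - c₂` of the transform in `h₂` is shifted to `c₁`.
-/

section CosTransform

variable {Ω E : Type*} [MeasurableSpace Ω] [SeminormedAddCommGroup E] [InnerProductSpace ℝ E]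
  [MeasurableSpace E] {P : Measure Ω} {μ ν : Measure E} {φ f g : E → ℝ}

/-- The cosine transform of the weight `f` against the measure `ν`, in the normalization
`cos ⟪x, t⟫` of `charFun`. It expresses both kernels: `h₁ x y` is the transform of `w₁` at `x - y`,
and `h₂` is, up to constants, the transform of `φ (w₁ - w₂)`. -/
noncomputable def cosTransform (ν : Measure E) (f : E → ℝ) (x : E) : ℝ :=
  ∫ t, cos ⟪x, t⟫ * f t ∂ν

lemma cosTransform_zero (ν : Measure E) (f : E → ℝ) : cosTransform ν f 0 = ∫ t, f t ∂ν := by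
  simp [cosTransform]

lemma cosTransform_neg (ν : Measure E) (f : E → ℝ) (x : E) :
    cosTransform ν f (-x) = cosTransform ν f x := by
  simp [cosTransform]

variable [OpensMeasurableSpace E]

lemma integrable_cos_inner_mul (hf : Integrable f ν) (x : E) :
    Integrable (fun t ↦ cos ⟪x, t⟫ * f t) ν :=
  hf.bdd_mul (c := 1) (by fun_prop) (.of_forall fun _ ↦ abs_cos_le_one _)

lemma cosTransform_sub (hf : Integrable f ν) (hg : Integrable g ν) (x : E) :
    cosTransform ν (f - g) x = cosTransform ν f x - cosTransform ν g x := by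
  simp only [cosTransform, Pi.sub_apply, mul_sub]
  exact integral_sub (integrable_cos_inner_mul hf x) (integrable_cos_inner_mul hg x)

variable [SecondCountableTopology E]

lemma integrable_prod_cos_inner_mul [IsFiniteMeasure P] [SFinite ν] {X : Ω → E}
    (hX : AEStronglyMeasurable X P) (hf : Integrable f ν) :
    Integrable (fun p : Ω × E ↦ cos ⟪X p.1, p.2⟫ * f p.2) (P.prod ν) :=
  have hinner : AEStronglyMeasurable (fun p : Ω × E ↦ ⟪X p.1, p.2⟫) (P.prod ν) :=
    continuous_inner.comp_aestronglyMeasurable₂ hX.comp_fst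
      measurable_snd.stronglyMeasurable.aestronglyMeasurable
  (hf.comp_snd P).bdd_mul (c := 1) (continuous_cos.comp_aestronglyMeasurable hinner)
    (.of_forall fun _ ↦ abs_cos_le_one _)

lemma integrable_cosTransform_comp [IsFiniteMeasure P] [SFinite ν] {X : Ω → E}
    (hX : AEStronglyMeasurable X P) (hf : Integrable f ν) :
    Integrable (fun ω ↦ cosTransform ν f (X ω)) P :=
  (integrable_prod_cos_inner_mul hX hf).integral_prod_left

lemma integral_cos_inner_sub [IsFiniteMeasure μ] (a t : E) :
    ∫ y, cos ⟪a - y, t⟫ ∂μ = (Complex.exp (⟪a, t⟫ * Complex.I) * charFun μ (-t)).re := by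
  have hint : Integrable (fun y ↦ Complex.exp (⟪a - y, t⟫ * Complex.I)) μ :=
    .of_bound (by fun_prop) 1 (.of_forall fun y ↦ (Complex.norm_exp_ofReal_mul_I _).le)
  calc ∫ y, cos ⟪a - y, t⟫ ∂μ
      = (∫ y, Complex.exp (⟪a - y, t⟫ * Complex.I) ∂μ).re := by
        simpa only [RCLike.re_to_complex, Complex.exp_ofReal_mul_I_re] using integral_re hint
    _ = (Complex.exp (⟪a, t⟫ * Complex.I) * charFun μ (-t)).re := by
        simp only [charFun_apply, ← integral_const_mul, ← Complex.exp_add, ← add_mul,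
          ← Complex.ofReal_add, inner_neg_right, ← sub_eq_add_neg, inner_sub_left]

lemma integral_cos_inner_sub_of_charFun_eq_ofReal [IsFiniteMeasure μ]
    (hφ : ∀ t, charFun μ t = φ t) (a t : E) :
    ∫ y, cos ⟪a - y, t⟫ ∂μ = cos ⟪a, t⟫ * φ t := by
  rw [integral_cos_inner_sub, charFun_neg, hφ, Complex.conj_ofReal, Complex.re_mul_ofReal,
    Complex.exp_ofReal_mul_I_re]

lemma integral_cosTransform_sub [IsFiniteMeasure μ] [SFinite ν]
    (hφ : ∀ t, charFun μ t = φ t) (hf : Integrable f ν) (a : E) :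
    ∫ y, cosTransform ν f (a - y) ∂μ = cosTransform ν (φ * f) a := by
  calc ∫ y, cosTransform ν f (a - y) ∂μ
      = ∫ t, ∫ y, cos ⟪a - y, t⟫ * f t ∂μ ∂ν :=
        integral_integral_swap (integrable_prod_cos_inner_mul (by fun_prop) hf)
    _ = cosTransform ν (φ * f) a := by
        simp only [integral_mul_const, integral_cos_inner_sub_of_charFun_eq_ofReal hφ,
          cosTransform, Pi.mul_apply, mul_assoc]

lemma integral_cosTransform [IsFiniteMeasure μ] [SFinite ν]
    (hφ : ∀ t, charFun μ t = φ t) (hf : Integrable f ν) :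
    ∫ y, cosTransform ν f y ∂μ = ∫ t, φ t * f t ∂ν := by
  simpa only [zero_sub, cosTransform_neg, cosTransform_zero, Pi.mul_apply]
    using integral_cosTransform_sub hφ hf 0

lemma integrable_mul_of_charFun_eq_ofReal [IsFiniteMeasure μ]
    (hφ : ∀ t, charFun μ t = φ t) (hf : Integrable f ν) : Integrable (φ * f) ν := by
  have hre : φ = fun t ↦ (charFun μ t).re := funext fun t ↦ by simp [hφ]
  have hmeas : Measurable φ := hre ▸ Complex.measurable_re.comp measurable_charFun
  refine hf.bdd_mul (c := μ.real Set.univ) hmeas.aestronglyMeasurable (.of_forall fun t ↦ ?_)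
  simpa [hφ] using norm_charFun_le (μ := μ) t

lemma integral_cosTransform_mul_sub [IsFiniteMeasure μ] [SFinite ν]
    (hφ : ∀ t, charFun μ t = φ t) (hf : Integrable f ν) (hg : Integrable g ν) :
    ∫ y, cosTransform ν (φ * (f - g)) y ∂μ = ∫ t, φ t ^ 2 * f t ∂ν - ∫ t, φ t ^ 2 * g t ∂ν := by
  have hφmul {k : E → ℝ} (hk : Integrable k ν) : Integrable (φ * k) ν :=
    integrable_mul_of_charFun_eq_ofReal hφ hk
  have hφφ {k : E → ℝ} (hk : Integrable k ν) : Integrable (fun t ↦ φ t ^ 2 * k t) ν := by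
    simpa only [Pi.mul_def, sq, mul_assoc] using hφmul (hφmul hk)
  rw [integral_cosTransform hφ (hφmul (hf.sub hg)), ← integral_sub (hφφ hf) (hφφ hg)]
  simp only [Pi.mul_apply, Pi.sub_apply, sq, mul_assoc, mul_sub]

end CosTransform

lemma cosTransform_real (ν : Measure ℝ) (f : ℝ → ℝ) (x : ℝ) :
    cosTransform ν f x = ∫ t, cos (t * x) * f t ∂ν := by
  simp only [cosTransform, RCLike.inner_apply, conj_trivial]

lemma charFun_eq_integral_exp_I_mul (μ : Measure ℝ) (t : ℝ) :
    charFun μ t = ∫ x, Complex.exp (Complex.I * t * x) ∂μ := by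
  simp only [charFun_apply_real, mul_comm, mul_left_comm]

lemma exp_neg_sq (a : ℝ) : rexp (-a) ^ 2 = rexp (-2 * a) := by
  rw [← exp_nat_mul, Nat.cast_ofNat, mul_neg, neg_mul]

theorem stmt14_general {E : Type*} [SeminormedAddCommGroup E] [InnerProductSpace ℝ E]
    [MeasurableSpace E] [OpensMeasurableSpace E] [SecondCountableTopology E]
    {μ ν : Measure E} [IsProbabilityMeasure μ] [SFinite ν] {φ w₁ w₂ : E → ℝ}
    (hφ : ∀ t, charFun μ t = φ t) (hw₁ : Integrable w₁ ν) (hw₂ : Integrable w₂ ν)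
    {c₁ c₂ : ℝ} (hc₁ : c₁ = 1 / 2 * ∫ t, φ t ^ 2 * w₁ t ∂ν) (hc₂ : c₂ = ∫ t, φ t ^ 2 * w₂ t ∂ν)
    {h₂ : E → ℝ} (hh₂ : ∀ x, h₂ x = cosTransform ν (φ * (w₁ - w₂)) x - c₁ + c₂) (x₁ : E) :
    (∫ y, cosTransform ν w₁ (x₁ - y) ∂μ = cosTransform ν (φ * w₁) x₁) ∧
    (∫ y, h₂ y ∂μ = c₁) ∧
    (∫ y, (cosTransform ν w₁ (x₁ - y) - h₂ x₁ - h₂ y) ∂μ = cosTransform ν (φ * w₂) x₁ - c₂) := by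
  have integrable_transform : Integrable (cosTransform ν (φ * (w₁ - w₂))) μ :=
    integrable_cosTransform_comp aestronglyMeasurable_id
      (integrable_mul_of_charFun_eq_ofReal hφ (hw₁.sub hw₂))
  have integrable_h₂ : Integrable h₂ μ := by
    rw [funext hh₂]
    exact (integrable_transform.sub (integrable_const c₁)).add (integrable_const c₂)
  have integrable_h₁ : Integrable (fun y ↦ cosTransform ν w₁ (x₁ - y)) μ :=
    integrable_cosTransform_comp (by fun_prop) hw₁
  have mean_h₁ := integral_cosTransform_sub hφ hw₁ x₁
  have mean_h₂ : ∫ y, h₂ y ∂μ = c₁ :=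
    calc ∫ y, h₂ y ∂μ = ∫ y, cosTransform ν (φ * (w₁ - w₂)) y ∂μ - (c₁ - c₂) := by
          simp only [hh₂, sub_add]
          rw [integral_sub integrable_transform (integrable_const _), integral_const,
            probReal_univ, one_smul]
      _ = c₁ := by rw [integral_cosTransform_mul_sub hφ hw₁ hw₂, ← hc₂]; linarith
  refine ⟨mean_h₁, mean_h₂, ?_⟩
  calc ∫ y, (cosTransform ν w₁ (x₁ - y) - h₂ x₁ - h₂ y) ∂μ
      = cosTransform ν (φ * w₁) x₁ - h₂ x₁ - c₁ := by
        rw [integral_sub (by exact integrable_h₁.sub (integrable_const _)) integrable_h₂,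
          integral_sub integrable_h₁ (integrable_const _), mean_h₁, mean_h₂, integral_const,
          probReal_univ, one_smul]
    _ = cosTransform ν (φ * w₂) x₁ - c₂ := by
        rw [hh₂, mul_sub, cosTransform_sub (integrable_mul_of_charFun_eq_ofReal hφ hw₁)
          (integrable_mul_of_charFun_eq_ofReal hφ hw₂)]
        ring

/-- Projections of the U-statistic kernel arising from the EISE scale estimating
equation, for a standard symmetric `α`-stable distribution `μ`. -/
theorem stmt14 (μ : Measure ℝ) [IsProbabilityMeasure μ] (α : ℝ) (hα : α ∈ Set.Ioc (0 : ℝ) 2)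
    (hchar : ∀ t : ℝ, ∫ x, Complex.exp (Complex.I * t * x) ∂μ = (Real.exp (-|t| ^ α) : ℂ))
    (w₁ w₂ : ℝ → ℝ) (hw₁0 : ∀ t, 0 ≤ w₁ t) (hw₂0 : ∀ t, 0 ≤ w₂ t)
    (hw₁e : ∀ t, w₁ (-t) = w₁ t) (hw₂e : ∀ t, w₂ (-t) = w₂ t)
    (hw₁i : Integrable w₁) (hw₂i : Integrable w₂)
    (h₁ : ℝ → ℝ → ℝ) (hh₁ : ∀ x y, h₁ x y = ∫ t : ℝ, Real.cos (t * (x - y)) * w₁ t)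
    (c₁ c₂ : ℝ) (hc₁ : c₁ = (1 / 2) * ∫ t : ℝ, Real.exp (-2 * |t| ^ α) * w₁ t)
    (hc₂ : c₂ = ∫ t : ℝ, Real.exp (-2 * |t| ^ α) * w₂ t)
    (h₂ : ℝ → ℝ)
    (hh₂ : ∀ x, h₂ x = (∫ t : ℝ, Real.cos (t * x) * Real.exp (-|t| ^ α) * (w₁ t - w₂ t))
        - c₁ + c₂)
    (x₁ : ℝ) :
    (∫ y, h₁ x₁ y ∂μ = ∫ t : ℝ, Real.cos (t * x₁) * Real.exp (-|t| ^ α) * w₁ t) ∧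
    (∫ y, h₂ y ∂μ = c₁) ∧
    (∫ y, (h₁ x₁ y - h₂ x₁ - h₂ y) ∂μ
        = (∫ t : ℝ, Real.cos (t * x₁) * Real.exp (-|t| ^ α) * w₂ t) - c₂) := by
  simpa [cosTransform_real, hh₁, mul_assoc] using
    stmt14_general (ν := volume) (φ := fun t ↦ rexp (-|t| ^ α)) (h₂ := h₂)
      (fun t ↦ (charFun_eq_integral_exp_I_mul μ t).trans (hchar t)) hw₁i hw₂i
      (by simpa only [exp_neg_sq] using hc₁) (by simpa only [exp_neg_sq] using hc₂)
      (by simpa [cosTransform_real, mul_assoc] using hh₂) x₁
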